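/- Let 1 < α, β ≤ 2, let m ≥ 1, let A_α and A_β be the m×m WSGD Toeplitz matrices of orders α and β built from the weights for (p,q)=(1,0) or (p,q)=(1,-1), let τ, h > 0, and let K₁⁺, K₂⁺, K₁⁻, K₂⁻ ≥ 0 with (K₁⁺)² + (K₂⁺)² ≠ 0 and (K₁⁻)² + (K₂⁻)² ≠ 0. Define D_x = (τ/(2h^α))·( K₁⁺ (I ⊗ A_α) + K₂⁺ (I ⊗ A_αᵀ) ) and D_y = (τ/(2h^β))·( K₁⁻ (A_β ⊗ I) + K₂⁻ (A_βᵀ ⊗ I) ). Then I - D_x and I - D_y are invertible, and the operator norms induced by the Euclidean norm satisfy ‖(I - D_x)^{-1}(I - D_y)^{-1}‖₂ ≤ 1, ‖(I - D_x)^{-1}(I + D_x)‖₂ ≤ 1, and ‖(I - D_y)^{-1}(I + D_y)‖₂ ≤ 1. -/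

import Mathlib

/-!
Everything reduces to the *dissipativity* of the WSGD matrix, `x ⬝ᵥ A *ᵥ x ≤ 0` for all `x`.
This property passes to transposes, Kronecker products with `1` and nonnegative combinations, hence
to `Dx` and `Dy`. If `D` is dissipative then `‖(1 - D) x‖² ≥ ‖x‖²` and
`‖(1 + D) x‖² ≤ ‖(1 - D) x‖²`, since the cross terms are `∓ 2 ⟪x, D x⟫`. So `1 - D` is invertible,
`(1 - D)⁻¹` is a contraction, and so is the Cayley transform
`(1 - D)⁻¹ (1 + D) = (1 + D) (1 - D)⁻¹`.

For the WSGD matrix, extend `x` by zero to `ℤ` and let `C k = ∑ₙ xₙ xₙ₊ₖ` be its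
autocorrelation. Then `x ⬝ᵥ A *ᵥ x = ∑ₖ wₖ C (k - 1)`, where `C` is even, `C k ≤ C 0`, and
`C 0 - C 2 ≤ 4 (C 0 - C 1)` because `∑ₙ (xₙ₋₁ - 2 xₙ + xₙ₊₁)² ≥ 0`. Rewrite the form as
`(∑ wₖ) C 0 - (w₀ + w₂) (C 0 - C 1) - w₃ (C 0 - C 2) - ∑_{k ≥ 4} wₖ (C 0 - C (k - 1))`.
It is nonpositive as soon as the partial sums of `w` are nonpositive, `wₖ ≥ 0` for `k ≥ 4`,
`w₀ + w₂ ≥ 0` and `w₀ + w₂ + 4 w₃ ≥ 0`. The last condition is what replaces diagonal dominance for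
`(p,q) = (1,-1)`, where `w₃ < 0` when `γ < 2`. The signs follow from
`g₀ + ⋯ + gₙ = ∏_{i = 1}^{n} (1 - γ / i)` and `gₙ₊₁ = -γ / (n + 1) (g₀ + ⋯ + gₙ)`.
-/

open Matrix Kronecker

set_option maxHeartbeats 1000000

/-- Grünwald coefficients `g_k = (-1)^k * binom(α, k)`. -/
noncomputable def gru (α : ℝ) (k : ℕ) : ℝ :=
  (-1 : ℝ) ^ k * (∏ i ∈ Finset.range k, (α - (i : ℝ))) / (Nat.factorial k : ℝ)

/-- WSGD weights for `(p,q) = (1,0)`. -/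
noncomputable def w10 (α : ℝ) : ℕ → ℝ
  | 0 => α / 2 * gru α 0
  | k + 1 => α / 2 * gru α (k + 1) + (2 - α) / 2 * gru α k

/-- WSGD weights for `(p,q) = (1,-1)`. -/
noncomputable def w1m1 (α : ℝ) : ℕ → ℝ
  | 0 => (2 + α) / 4 * gru α 0
  | 1 => (2 + α) / 4 * gru α 1
  | k + 2 => (2 + α) / 4 * gru α (k + 2) + (2 - α) / 4 * gru α k

/-- The m×m WSGD Toeplitz matrix: `A i j = w (i - j + 1)` when `i - j + 1 ≥ 0`, else `0`
(0-based indices give the same entries as the 1-based description). -/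
noncomputable def wsgdMatrix (w : ℕ → ℝ) (m : ℕ) : Matrix (Fin m) (Fin m) ℝ :=
  Matrix.of fun i j => if (j : ℕ) ≤ (i : ℕ) + 1 then w ((i : ℕ) + 1 - (j : ℕ)) else 0

/-! ### Dissipative matrices -/

/-- A real square matrix whose quadratic form is nonpositive (it need not be symmetric). -/
def Dissip {n : Type*} [Fintype n] (D : Matrix n n ℝ) : Prop :=
  ∀ x : n → ℝ, x ⬝ᵥ (D *ᵥ x) ≤ 0

section Dissip

variable {n : Type*} [Fintype n]

lemma Dissip.transpose {D : Matrix n n ℝ} (h : Dissip D) : Dissip Dᵀ := by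
  intro x
  rw [Matrix.mulVec_transpose, dotProduct_comm, ← Matrix.dotProduct_mulVec]
  exact h x

lemma Dissip.add {D E : Matrix n n ℝ} (hD : Dissip D) (hE : Dissip E) : Dissip (D + E) := by
  intro x
  rw [Matrix.add_mulVec, dotProduct_add]
  exact add_nonpos (hD x) (hE x)

lemma Dissip.smul {D : Matrix n n ℝ} (hD : Dissip D) {c : ℝ} (hc : 0 ≤ c) : Dissip (c • D) := by
  intro x
  rw [Matrix.smul_mulVec, dotProduct_smul, smul_eq_mul]
  exact mul_nonpos_of_nonneg_of_nonpos hc (hD x)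

lemma Dissip.one_kronecker [DecidableEq n] {D : Matrix n n ℝ} (hD : Dissip D) :
    Dissip ((1 : Matrix n n ℝ) ⊗ₖ D) := by
  intro x
  have : x ⬝ᵥ (((1 : Matrix n n ℝ) ⊗ₖ D) *ᵥ x)
      = ∑ i, (fun j => x (i, j)) ⬝ᵥ (D *ᵥ fun j => x (i, j)) := by
    simp only [dotProduct, Matrix.mulVec, Fintype.sum_prod_type, Matrix.kroneckerMap_apply]
    refine Finset.sum_congr rfl fun i _ => Finset.sum_congr rfl fun j _ => ?_
    congr 1
    rw [Finset.sum_eq_single i]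
    · simp
    · intro b _ hb
      simp [Matrix.one_apply_ne hb.symm]
    · simp
  rw [this]
  exact Finset.sum_nonpos fun i _ => hD _

lemma Dissip.kronecker_one [DecidableEq n] {D : Matrix n n ℝ} (hD : Dissip D) :
    Dissip (D ⊗ₖ (1 : Matrix n n ℝ)) := by
  intro x
  have : x ⬝ᵥ ((D ⊗ₖ (1 : Matrix n n ℝ)) *ᵥ x)
      = ∑ j, (fun i => x (i, j)) ⬝ᵥ (D *ᵥ fun i => x (i, j)) := by
    simp only [dotProduct, Matrix.mulVec, Fintype.sum_prod_type, Matrix.kroneckerMap_apply]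
    rw [Finset.sum_comm]
    refine Finset.sum_congr rfl fun i _ => Finset.sum_congr rfl fun j _ => ?_
    congr 1
    refine Finset.sum_congr rfl fun k _ => ?_
    rw [Finset.sum_eq_single i]
    · simp
    · intro b _ hb
      simp [Matrix.one_apply_ne hb.symm]
    · simp
  rw [this]
  exact Finset.sum_nonpos fun i _ => hD _

/-- To bound an operator norm by `1` it suffices to compare sums of squares. -/
lemma norm_toEuclideanLin_le_one [DecidableEq n] (M : Matrix n n ℝ)
    (h : ∀ x : n → ℝ, (M *ᵥ x) ⬝ᵥ (M *ᵥ x) ≤ x ⬝ᵥ x) :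
    ‖LinearMap.toContinuousLinearMap (Matrix.toEuclideanLin M)‖ ≤ 1 := by
  refine ContinuousLinearMap.opNorm_le_bound _ zero_le_one fun x => ?_
  rw [one_mul]
  refine le_of_sq_le_sq ?_ (norm_nonneg _)
  rw [EuclideanSpace.real_norm_sq_eq, EuclideanSpace.real_norm_sq_eq]
  have := h x.ofLp
  simpa [dotProduct, pow_two, Matrix.toLpLin_apply] using this

lemma dotProduct_sub_mulVec [DecidableEq n] (D : Matrix n n ℝ) (x : n → ℝ) :
    ((1 - D) *ᵥ x) ⬝ᵥ ((1 - D) *ᵥ x)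
      = x ⬝ᵥ x - 2 * (x ⬝ᵥ (D *ᵥ x)) + (D *ᵥ x) ⬝ᵥ (D *ᵥ x) := by
  simp only [Matrix.sub_mulVec, Matrix.one_mulVec, sub_dotProduct, dotProduct_sub]
  rw [dotProduct_comm (D *ᵥ x) x]
  ring

lemma dotProduct_add_mulVec [DecidableEq n] (D : Matrix n n ℝ) (x : n → ℝ) :
    ((1 + D) *ᵥ x) ⬝ᵥ ((1 + D) *ᵥ x)
      = x ⬝ᵥ x + 2 * (x ⬝ᵥ (D *ᵥ x)) + (D *ᵥ x) ⬝ᵥ (D *ᵥ x) := by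
  simp only [Matrix.add_mulVec, Matrix.one_mulVec, add_dotProduct, dotProduct_add]
  rw [dotProduct_comm (D *ᵥ x) x]
  ring

lemma dotProduct_self_nonneg' (x : n → ℝ) : 0 ≤ x ⬝ᵥ x :=
  Finset.sum_nonneg fun i _ => mul_self_nonneg (x i)

lemma Dissip.le_sub [DecidableEq n] {D : Matrix n n ℝ} (hD : Dissip D) (x : n → ℝ) :
    x ⬝ᵥ x ≤ ((1 - D) *ᵥ x) ⬝ᵥ ((1 - D) *ᵥ x) := by
  rw [dotProduct_sub_mulVec]
  linarith [hD x, dotProduct_self_nonneg' (D *ᵥ x)]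

lemma Dissip.isUnit [DecidableEq n] {D : Matrix n n ℝ} (hD : Dissip D) : IsUnit (1 - D) := by
  rw [← Matrix.mulVec_injective_iff_isUnit]
  intro x y hxy
  have h0 : (1 - D) *ᵥ (x - y) = 0 := by
    rw [Matrix.mulVec_sub]
    exact sub_eq_zero.mpr hxy
  have h1 := hD.le_sub (x - y)
  rw [h0, dotProduct_zero] at h1
  exact sub_eq_zero.mp
    (dotProduct_self_eq_zero.mp (le_antisymm h1 (dotProduct_self_nonneg' _)))

lemma Dissip.inv_contract [DecidableEq n] {D : Matrix n n ℝ} (hD : Dissip D) (x : n → ℝ) :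
    ((1 - D)⁻¹ *ᵥ x) ⬝ᵥ ((1 - D)⁻¹ *ᵥ x) ≤ x ⬝ᵥ x := by
  have hu := (Matrix.isUnit_iff_isUnit_det _).mp hD.isUnit
  have h := hD.le_sub ((1 - D)⁻¹ *ᵥ x)
  rwa [Matrix.mulVec_mulVec, Matrix.mul_nonsing_inv _ hu, Matrix.one_mulVec] at h

/-- The Cayley transform of a dissipative matrix is a contraction. -/
lemma Dissip.cayley [DecidableEq n] {D : Matrix n n ℝ} (hD : Dissip D) :
    ‖LinearMap.toContinuousLinearMap
        (Matrix.toEuclideanLin ((1 - D)⁻¹ * (1 + D)))‖ ≤ 1 := by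
  have hu := (Matrix.isUnit_iff_isUnit_det _).mp hD.isUnit
  have hcomm : (1 - D)⁻¹ * (1 + D) = (1 + D) * (1 - D)⁻¹ := by
    have h1 : (1 - D) * ((1 + D) * (1 - D)⁻¹) = 1 + D := by
      rw [← mul_assoc, show (1 - D) * (1 + D) = (1 + D) * (1 - D) by noncomm_ring,
        mul_assoc, Matrix.mul_nonsing_inv _ hu, mul_one]
    calc (1 - D)⁻¹ * (1 + D) = (1 - D)⁻¹ * ((1 - D) * ((1 + D) * (1 - D)⁻¹)) := by rw [h1]
      _ = _ := by rw [← mul_assoc, Matrix.nonsing_inv_mul _ hu, one_mul]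
  refine norm_toEuclideanLin_le_one _ fun x => ?_
  rw [hcomm, ← Matrix.mulVec_mulVec]
  have hx : (1 - D) *ᵥ ((1 - D)⁻¹ *ᵥ x) = x := by
    rw [Matrix.mulVec_mulVec, Matrix.mul_nonsing_inv _ hu, Matrix.one_mulVec]
  have h := dotProduct_sub_mulVec D ((1 - D)⁻¹ *ᵥ x)
  rw [hx] at h
  rw [dotProduct_add_mulVec, h]
  linarith [hD ((1 - D)⁻¹ *ᵥ x)]

end Dissip

/-! ### Autocorrelations of finitely supported sequences -/

/-- The autocorrelation `∑ₙ xₙ₊ₖ xₙ` at lag `k`; used for finitely supported `x` only. -/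
noncomputable def corr (X : ℤ → ℝ) (k : ℤ) : ℝ := ∑' n : ℤ, X (n + k) * X n

lemma summable_shift_mul {X : ℤ → ℝ} (hX : X.support.Finite) (a b : ℤ) :
    Summable fun n : ℤ => X (n + a) * X (n + b) := by
  refine summable_of_hasFiniteSupport ((hX.preimage (f := fun n : ℤ => n + b)
    (add_left_injective b).injOn).subset ?_)
  intro n hn
  exact right_ne_zero_of_mul hn

lemma tsum_shift_mul (X : ℤ → ℝ) (a b : ℤ) :
    ∑' n : ℤ, X (n + a) * X (n + b) = corr X (a - b) := by
  unfold corr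
  rw [← (Equiv.addRight b).tsum_eq fun n : ℤ => X (n + (a - b)) * X n]
  refine tsum_congr fun n => ?_
  simp only [Equiv.coe_addRight]
  congr 2
  ring

lemma corr_neg (X : ℤ → ℝ) (k : ℤ) : corr X (-k) = corr X k := by
  have h := tsum_shift_mul X 0 k
  rw [zero_sub] at h
  rw [← h, corr]
  exact tsum_congr fun n => by rw [add_zero, mul_comm]

lemma corr_zero_nonneg (X : ℤ → ℝ) : 0 ≤ corr X 0 :=
  tsum_nonneg fun n => by rw [add_zero]; exact mul_self_nonneg _

lemma hasSum_shift_mul {X : ℤ → ℝ} (hX : X.support.Finite) (a b : ℤ) :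
    HasSum (fun n : ℤ => X (n + a) * X (n + b)) (corr X (a - b)) := by
  rw [← tsum_shift_mul]
  exact (summable_shift_mul hX a b).hasSum

lemma corr_le {X : ℤ → ℝ} (hX : X.support.Finite) (k : ℤ) : corr X k ≤ corr X 0 := by
  have h := ((hasSum_shift_mul hX k k).add (hasSum_shift_mul hX 0 0)).sub
    ((hasSum_shift_mul hX k 0).mul_left 2)
  have h0 := h.nonneg fun n => by
    have := sq_nonneg (X (n + k) - X (n + 0))
    nlinarith
  simp only [sub_self, sub_zero] at h0
  linarith

/-- The sum of the squared second differences is `6 C₀ - 8 C₁ + 2 C₂`. -/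
lemma corr_two {X : ℤ → ℝ} (hX : X.support.Finite) :
    corr X 0 - corr X 2 ≤ 4 * (corr X 0 - corr X 1) := by
  have h := ((((hasSum_shift_mul hX 2 2).add ((hasSum_shift_mul hX 1 1).mul_left 4)).add
    (hasSum_shift_mul hX 0 0)).sub
    (((hasSum_shift_mul hX 2 1).mul_left 4).add ((hasSum_shift_mul hX 1 0).mul_left 4))).add
    ((hasSum_shift_mul hX 2 0).mul_left 2)
  have h0 := h.nonneg fun n => by
    have := sq_nonneg (X (n + 2) - 2 * X (n + 1) + X (n + 0))
    nlinarith
  norm_num at h0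
  linarith

/-! ### The quadratic form of a WSGD matrix -/

/-- The extension by zero to `ℤ` of a vector indexed by `Fin m`. -/
noncomputable def extZ {m : ℕ} (x : Fin m → ℝ) (t : ℤ) : ℝ :=
  ∑ i : Fin m, if (i : ℤ) = t then x i else 0

lemma extZ_coe {m : ℕ} (x : Fin m → ℝ) (j : Fin m) : extZ x (j : ℤ) = x j := by
  unfold extZ
  rw [Finset.sum_eq_single j]
  · simp
  · intro b _ hb
    rw [if_neg]
    intro h
    exact hb (Fin.ext (by exact_mod_cast h))
  · simp

lemma support_extZ {m : ℕ} (x : Fin m → ℝ) :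
    (extZ x).support ⊆ Set.range fun i : Fin m => (i : ℤ) := by
  intro t ht
  obtain ⟨i, -, hi⟩ := Finset.exists_ne_zero_of_sum_ne_zero ht
  refine ⟨i, ?_⟩
  by_contra hne
  exact hi (if_neg hne)

lemma corr_extZ {m : ℕ} (x : Fin m → ℝ) (k : ℤ) :
    corr (extZ x) k = ∑ j : Fin m, extZ x (j + k) * x j := by
  have hinj : Function.Injective fun i : Fin m => (i : ℤ) := by
    intro a b hab
    exact Fin.ext (Int.ofNat_inj.mp hab)
  unfold corr
  rw [← hinj.tsum_eq (f := fun n : ℤ => extZ x (n + k) * extZ x n), tsum_fintype]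
  · exact Finset.sum_congr rfl fun j _ => by rw [extZ_coe]
  · intro n hn
    exact support_extZ x (right_ne_zero_of_mul hn)

lemma wsgd_form (w : ℕ → ℝ) {m N : ℕ} (hN : m + 1 ≤ N) (x : Fin m → ℝ) :
    x ⬝ᵥ (wsgdMatrix w m *ᵥ x)
      = ∑ k ∈ Finset.range N, w k * corr (extZ x) ((k : ℤ) - 1) := by
  have hentry : ∀ i j : Fin m, wsgdMatrix w m i j
      = ∑ k ∈ Finset.range N, if (i : ℤ) = j + ((k : ℤ) - 1) then w k else 0 := by
    intro i j
    have hi := i.isLt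
    simp only [wsgdMatrix, Matrix.of_apply]
    split_ifs with h
    · rw [Finset.sum_eq_single ((i : ℕ) + 1 - j)]
      · rw [if_pos (by omega)]
      · intro b _ hb
        exact if_neg (by omega)
      · intro hb
        rw [Finset.mem_range] at hb
        omega
    · symm
      exact Finset.sum_eq_zero fun k _ => if_neg (by omega)
  simp only [dotProduct, Matrix.mulVec, hentry, corr_extZ, extZ, Finset.mul_sum, Finset.sum_mul]
  rw [Finset.sum_comm]
  conv_lhs => enter [2, j]; rw [Finset.sum_comm]
  rw [Finset.sum_comm]
  refine Finset.sum_congr rfl fun k _ => Finset.sum_congr rfl fun j _ =>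
    Finset.sum_congr rfl fun i _ => ?_
  split_ifs <;> ring

/-- The sign conditions on the weights that make the quadratic form nonpositive. The condition on
`w 3` compares lag `2` with lag `1` through `corr_two`, so `w 3` may be negative. -/
lemma dissip_wsgd (w : ℕ → ℝ) (m : ℕ) (h02 : 0 ≤ w 0 + w 2) (h3 : 0 ≤ w 0 + w 2 + 4 * w 3)
    (h4 : ∀ k, 0 ≤ w (k + 4)) (hs : ∀ N, ∑ k ∈ Finset.range (N + 4), w k ≤ 0) :
    Dissip (wsgdMatrix w m) := by
  intro x
  rw [wsgd_form w (N := m + 4) (by omega)]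
  have hX : (extZ x).support.Finite := (Set.finite_range _).subset (support_extZ x)
  set C := corr (extZ x) with hC
  have hsplit : ∑ k ∈ Finset.range (m + 4), w k * C ((k : ℤ) - 1)
      = (∑ k ∈ Finset.range (m + 4), w k) * C 0
        - ((w 0 + w 2) * (C 0 - C 1) + w 3 * (C 0 - C 2))
        - ∑ k ∈ Finset.range m, w (k + 4) * (C 0 - C ((k : ℤ) + 3)) := by
    have hneg : C (-1) = C 1 := corr_neg _ 1
    have htail : ∑ k ∈ Finset.range m, w (k + 4) * C (((k + 4 : ℕ) : ℤ) - 1)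
        = (∑ k ∈ Finset.range m, w (k + 4)) * C 0
          - ∑ k ∈ Finset.range m, w (k + 4) * (C 0 - C ((k : ℤ) + 3)) := by
      rw [Finset.sum_mul, ← Finset.sum_sub_distrib]
      refine Finset.sum_congr rfl fun k _ => ?_
      rw [show (((k + 4 : ℕ) : ℤ) - 1) = (k : ℤ) + 3 by push_cast; ring]
      ring
    rw [add_comm m 4, Finset.sum_range_add, Finset.sum_range_add]
    simp only [add_comm 4]
    rw [htail]
    simp only [Finset.sum_range_succ, Finset.sum_range_zero]
    norm_num [hneg]
    ring
  rw [hsplit]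
  have h1 : (∑ k ∈ Finset.range (m + 4), w k) * C 0 ≤ 0 :=
    mul_nonpos_of_nonpos_of_nonneg (hs m) (corr_zero_nonneg _)
  have h2 : 0 ≤ ∑ k ∈ Finset.range m, w (k + 4) * (C 0 - C ((k : ℤ) + 3)) :=
    Finset.sum_nonneg fun k _ => mul_nonneg (h4 k) (sub_nonneg.mpr (corr_le hX _))
  have h5 : 0 ≤ (w 0 + w 2) * (C 0 - C 1) + w 3 * (C 0 - C 2) := by
    have c1 : 0 ≤ C 0 - C 1 := sub_nonneg.mpr (corr_le hX _)
    have c2 : 0 ≤ C 0 - C 2 := sub_nonneg.mpr (corr_le hX _)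
    have c12 : C 0 - C 2 ≤ 4 * (C 0 - C 1) := corr_two hX
    rcases le_total 0 (w 3) with hw | hw
    · exact add_nonneg (mul_nonneg h02 c1) (mul_nonneg hw c2)
    · nlinarith [mul_nonneg h3 c1, mul_le_mul_of_nonpos_left c12 hw]
  linarith

/-! ### Signs of the weights -/

lemma gru_zero (α : ℝ) : gru α 0 = 1 := by simp [gru]

lemma gru_succ (α : ℝ) (k : ℕ) : gru α (k + 1) = gru α k * ((k - α) / (k + 1)) := by
  unfold gru
  rw [Finset.prod_range_succ, Nat.factorial_succ, pow_succ]
  push_cast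
  have : (Nat.factorial k : ℝ) ≠ 0 := by positivity
  have : (k : ℝ) + 1 ≠ 0 := by positivity
  field_simp
  ring

/-- The partial sums `g₀ + ⋯ + gₙ`. -/
noncomputable def gruSum (α : ℝ) (n : ℕ) : ℝ := ∑ k ∈ Finset.range (n + 1), gru α k

lemma gruSum_succ (α : ℝ) (n : ℕ) : gruSum α (n + 1) = gruSum α n + gru α (n + 1) :=
  Finset.sum_range_succ _ _

lemma gru_eq_gruSum (α : ℝ) (n : ℕ) : gru α (n + 1) = -(α / (n + 1)) * gruSum α n := by
  induction n with
  | zero => simp [gruSum, gru_succ, gru_zero]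
  | succ n ih =>
    rw [gruSum_succ, gru_succ α (n + 1)]
    have hS : gru α (n + 1) * ((n : ℝ) + 1) = -α * gruSum α n := by
      rw [ih]; field_simp
    have h1 : (n : ℝ) + 1 ≠ 0 := by positivity
    have h2 : (n : ℝ) + 1 + 1 ≠ 0 := by positivity
    push_cast
    field_simp
    linear_combination hS

lemma gruSum_nonpos {α : ℝ} (h1 : 1 < α) (h2 : α ≤ 2) (n : ℕ) : gruSum α (n + 1) ≤ 0 := by
  induction n with
  | zero => simp [gruSum, Finset.sum_range_succ, gru_succ, gru_zero]; linarith
  | succ n ih =>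
    rw [gruSum_succ, gru_eq_gruSum]
    have hle : α / (((n + 1 : ℕ) : ℝ) + 1) ≤ 1 := by
      rw [div_le_one (by positivity)]
      push_cast
      have : (0 : ℝ) ≤ n := Nat.cast_nonneg n
      linarith
    nlinarith

lemma gru_nonneg {α : ℝ} (h1 : 1 < α) (h2 : α ≤ 2) (n : ℕ) : 0 ≤ gru α (n + 2) := by
  rw [gru_eq_gruSum]
  have := gruSum_nonpos h1 h2 n
  have : 0 ≤ α / (((n + 1 : ℕ) : ℝ) + 1) := div_nonneg (by linarith) (by positivity)
  nlinarith

lemma gru_small (α : ℝ) : gru α 1 = -α ∧ gru α 2 = α * (α - 1) / 2 ∧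
    gru α 3 = α * (α - 1) * (2 - α) / 6 := by
  refine ⟨?_, ?_, ?_⟩ <;> simp [gru_succ, gru_zero] <;> ring

lemma sum_w10 (α : ℝ) (n : ℕ) : ∑ k ∈ Finset.range (n + 2), w10 α k
    = α / 2 * gruSum α (n + 1) + (2 - α) / 2 * gruSum α n := by
  induction n with
  | zero => simp [Finset.sum_range_succ, gruSum, w10]; ring
  | succ n ih =>
    rw [Finset.sum_range_succ, ih, gruSum_succ α (n + 1), gruSum_succ α n, w10]
    ring

lemma sum_w1m1 (α : ℝ) (n : ℕ) : ∑ k ∈ Finset.range (n + 3), w1m1 α k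
    = (2 + α) / 4 * gruSum α (n + 2) + (2 - α) / 4 * gruSum α n := by
  induction n with
  | zero => simp [Finset.sum_range_succ, gruSum, w1m1]; ring
  | succ n ih =>
    rw [Finset.sum_range_succ, ih, gruSum_succ α (n + 2), gruSum_succ α n, w1m1]
    ring

lemma dissip_w10 {α : ℝ} (h1 : 1 < α) (h2 : α ≤ 2) (m : ℕ) :
    Dissip (wsgdMatrix (w10 α) m) := by
  have hw : ∀ k, 0 ≤ w10 α (k + 3) := fun k =>
    add_nonneg (mul_nonneg (by linarith) (gru_nonneg h1 h2 (k + 1)))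
      (mul_nonneg (by linarith) (gru_nonneg h1 h2 k))
  have h02 : 0 ≤ w10 α 0 + w10 α 2 := by
    obtain ⟨g1, g2, -⟩ := gru_small α
    have : w10 α 0 + w10 α 2 = α * (α + 2) * (α - 1) / 4 := by
      simp only [w10, gru_zero, Nat.reduceAdd, g1, g2]
      ring
    rw [this]
    have : 0 ≤ α - 1 := by linarith
    positivity
  refine dissip_wsgd _ m h02 (by linarith [hw 0]) (fun k => hw (k + 1)) fun N => ?_
  rw [sum_w10 α (N + 2)]
  have := gruSum_nonpos h1 h2 (N + 2)
  have := gruSum_nonpos h1 h2 (N + 1)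
  nlinarith

lemma dissip_w1m1 {α : ℝ} (h1 : 1 < α) (h2 : α ≤ 2) (m : ℕ) :
    Dissip (wsgdMatrix (w1m1 α) m) := by
  obtain ⟨g1, g2, g3⟩ := gru_small α
  have e0 : w1m1 α 0 = (2 + α) / 4 := by simp [w1m1, gru_zero]
  have e2 : w1m1 α 2 = (2 + α) / 4 * (α * (α - 1) / 2) + (2 - α) / 4 := by
    simp [w1m1, gru_zero, g2]
  have e3 : w1m1 α 3 = (2 + α) / 4 * (α * (α - 1) * (2 - α) / 6) + (2 - α) / 4 * (-α) := by
    simp [w1m1, g1, g3]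
  have ha : 0 ≤ α - 1 := by linarith
  have hb : 0 ≤ 2 - α := by linarith
  refine dissip_wsgd _ m ?_ ?_ (fun k => ?_) fun N => ?_
  · rw [e0, e2]
    positivity
  · -- The constant parts cancel: `(2 + α) / 4 + (2 - α) / 4 = 1` and `1 - (2 - α) α = (α - 1)²`.
    have : w1m1 α 0 + w1m1 α 2 + 4 * w1m1 α 3
        = (2 + α) * α * (α - 1) / 8 + (2 + α) * α * (α - 1) * (2 - α) / 6 + (α - 1) ^ 2 := by
      rw [e0, e2, e3]
      ring
    rw [this]
    positivity
  · exact add_nonneg (mul_nonneg (by linarith) (gru_nonneg h1 h2 (k + 2)))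
      (mul_nonneg (by linarith) (gru_nonneg h1 h2 k))
  · rw [sum_w1m1 α (N + 1)]
    have := gruSum_nonpos h1 h2 (N + 2)
    have := gruSum_nonpos h1 h2 N
    nlinarith

lemma dissip_of_or {α : ℝ} (h1 : 1 < α) (h2 : α ≤ 2) {m : ℕ} {A : Matrix (Fin m) (Fin m) ℝ}
    (hA : A = wsgdMatrix (w10 α) m ∨ A = wsgdMatrix (w1m1 α) m) : Dissip A := by
  rcases hA with rfl | rfl
  · exact dissip_w10 h1 h2 m
  · exact dissip_w1m1 h1 h2 m

theorem ADI_operator_norms (α β : ℝ) (hα1 : 1 < α) (hα2 : α ≤ 2)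
    (hβ1 : 1 < β) (hβ2 : β ≤ 2) (m : ℕ) (hm : 1 ≤ m)
    (Aα Aβ : Matrix (Fin m) (Fin m) ℝ)
    (hAα : Aα = wsgdMatrix (w10 α) m ∨ Aα = wsgdMatrix (w1m1 α) m)
    (hAβ : Aβ = wsgdMatrix (w10 β) m ∨ Aβ = wsgdMatrix (w1m1 β) m)
    (τ h : ℝ) (hτ : 0 < τ) (hh : 0 < h)
    (K1p K2p K1m K2m : ℝ) (hK1p : 0 ≤ K1p) (hK2p : 0 ≤ K2p)
    (hK1m : 0 ≤ K1m) (hK2m : 0 ≤ K2m)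
    (hKp : K1p ^ 2 + K2p ^ 2 ≠ 0) (hKm : K1m ^ 2 + K2m ^ 2 ≠ 0)
    (Dx Dy : Matrix (Fin m × Fin m) (Fin m × Fin m) ℝ)
    (hDx : Dx = (τ / (2 * h ^ α)) •
      (K1p • ((1 : Matrix (Fin m) (Fin m) ℝ) ⊗ₖ Aα)
        + K2p • ((1 : Matrix (Fin m) (Fin m) ℝ) ⊗ₖ Aαᵀ)))
    (hDy : Dy = (τ / (2 * h ^ β)) •
      (K1m • (Aβ ⊗ₖ (1 : Matrix (Fin m) (Fin m) ℝ))
        + K2m • (Aβᵀ ⊗ₖ (1 : Matrix (Fin m) (Fin m) ℝ)))) :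
    IsUnit (1 - Dx) ∧ IsUnit (1 - Dy) ∧
    ‖LinearMap.toContinuousLinearMap
        (Matrix.toEuclideanLin ((1 - Dx)⁻¹ * (1 - Dy)⁻¹))‖ ≤ 1 ∧
    ‖LinearMap.toContinuousLinearMap
        (Matrix.toEuclideanLin ((1 - Dx)⁻¹ * (1 + Dx)))‖ ≤ 1 ∧
    ‖LinearMap.toContinuousLinearMap
        (Matrix.toEuclideanLin ((1 - Dy)⁻¹ * (1 + Dy)))‖ ≤ 1 := by
  have dA := dissip_of_or hα1 hα2 hAα
  have dB := dissip_of_or hβ1 hβ2 hAβ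
  have dx : Dissip Dx := by
    rw [hDx]
    exact ((dA.one_kronecker.smul hK1p).add (dA.transpose.one_kronecker.smul hK2p)).smul
      (by positivity)
  have dy : Dissip Dy := by
    rw [hDy]
    exact ((dB.kronecker_one.smul hK1m).add (dB.transpose.kronecker_one.smul hK2m)).smul
      (by positivity)
  refine ⟨dx.isUnit, dy.isUnit, ?_, dx.cayley, dy.cayley⟩
  refine norm_toEuclideanLin_le_one _ fun x => ?_
  rw [← Matrix.mulVec_mulVec]
  exact (dx.inv_contract _).trans (dy.inv_contract x)
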